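/- One has ∑_{n≥0} a_{0,1}(n)/4ⁿ = 1/2 and ∑_{n≥0} a_{1,0}(n)/4ⁿ = 2 − √2 (both series converge). Probabilistically: a simple random walk on ℤ² started at (0,1) (resp. (1,0)), stopped at its first visit to the half-line H = {(k,0) : k ≤ 0}, stops at the origin with probability 1/2 (resp. 2 − √2). -/

import Mathlib

open Filter

/-- The forbidden half-line `H = {(k,0) : k ≤ 0}`. -/
def slitH : Set (ℤ × ℤ) := {p : ℤ × ℤ | p.2 = 0 ∧ p.1 ≤ 0}

/-- The four steps of the ordinary square lattice. -/
def sqSteps : Set (ℤ × ℤ) := {(1,0), (-1,0), (0,1), (0,-1)}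

/-- The four diagonal steps. -/
def diagSteps : Set (ℤ × ℤ) := {(1,1), (1,-1), (-1,1), (-1,-1)}

/-- `w : Fin (n+1) → ℤ × ℤ` is a walk on the slit plane with steps in `A`. -/
def IsSlitWalk (A : Set (ℤ × ℤ)) (n : ℕ) (w : Fin (n+1) → ℤ × ℤ) : Prop :=
  w 0 = (0,0) ∧ (∀ m : Fin n, w m.succ - w m.castSucc ∈ A) ∧
    ∀ m : Fin (n+1), 1 ≤ (m : ℕ) → w m ∉ slitH

/-- `a_{i,j}(n)`: the number of walks on the slit plane of length `n` ending at `(i,j)`. -/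
noncomputable def slitCount (A : Set (ℤ × ℤ)) (i j : ℤ) (n : ℕ) : ℕ :=
  Nat.card {w : Fin (n+1) → ℤ × ℤ // IsSlitWalk A n w ∧ w (Fin.last n) = (i, j)}

/-- The weights (numbers of walks), defined recursively. -/
noncomputable def slitW : ℕ → ℤ × ℤ → ℝ
  | 0, p => if p = (0, 0) then 1 else 0
  | n + 1, p => if p.2 = 0 ∧ p.1 ≤ 0 then 0 else
      slitW n (p.1 - 1, p.2) + slitW n (p.1 + 1, p.2) + slitW n (p.1, p.2 - 1)
        + slitW n (p.1, p.2 + 1)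

def stepVec : Fin 4 → ℤ × ℤ := ![(1, 0), (-1, 0), (0, 1), (0, -1)]

abbrev SlitWalksTo (n : ℕ) (p : ℤ × ℤ) : Type :=
  {w : Fin (n+1) → ℤ × ℤ // IsSlitWalk sqSteps n w ∧ w (Fin.last n) = p}

lemma stepVec_mem (k : Fin 4) : stepVec k ∈ sqSteps := by
  fin_cases k <;> simp [stepVec, sqSteps]

lemma exists_stepVec {e : ℤ × ℤ} (h : e ∈ sqSteps) : ∃ k, stepVec k = e := by
  simp only [sqSteps, Set.mem_insert_iff, Set.mem_singleton_iff] at h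
  rcases h with h | h | h | h
  · exact ⟨0, h.symm⟩
  · exact ⟨1, h.symm⟩
  · exact ⟨2, h.symm⟩
  · exact ⟨3, h.symm⟩

lemma stepVec_inj : Function.Injective stepVec := by
  intro a b
  fin_cases a <;> fin_cases b <;> simp [stepVec]

lemma isSlitWalk_snoc {n : ℕ} {p : ℤ × ℤ} (hp : p ∉ slitH) (w : Fin (n+1) → ℤ × ℤ)
    (hw : IsSlitWalk sqSteps n w) (hl : p - w (Fin.last n) ∈ sqSteps) :
    IsSlitWalk sqSteps (n+1) (Fin.snoc (α := fun _ => ℤ × ℤ) w p) := by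
  obtain ⟨h0, h1, h2⟩ := hw
  refine ⟨?_, ?_, ?_⟩
  · have : (0 : Fin (n+1+1)) = Fin.castSucc 0 := rfl
    rw [this, Fin.snoc_castSucc, h0]
  · intro m
    refine Fin.lastCases ?_ (fun m => ?_) m
    · rw [Fin.succ_last, Fin.snoc_last, Fin.snoc_castSucc]; exact hl
    · rw [← Fin.castSucc_succ, Fin.snoc_castSucc, Fin.snoc_castSucc]; exact h1 m
  · intro m
    refine Fin.lastCases ?_ (fun m => ?_) m
    · intro _; rw [Fin.snoc_last]; exact hp
    · intro hm; rw [Fin.snoc_castSucc]; exact h2 m hm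

noncomputable def extendWalk (n : ℕ) (p : ℤ × ℤ) (hp : p ∉ slitH) :
    (Σ k : Fin 4, SlitWalksTo n (p - stepVec k)) → SlitWalksTo (n+1) p :=
  fun x => ⟨Fin.snoc (α := fun _ => ℤ × ℤ) x.2.1 p,
    isSlitWalk_snoc hp x.2.1 x.2.2.1 (by rw [x.2.2.2, sub_sub_cancel]; exact stepVec_mem _),
    Fin.snoc_last _ _⟩

lemma extendWalk_bij (n : ℕ) (p : ℤ × ℤ) (hp : p ∉ slitH) :
    Function.Bijective (extendWalk n p hp) := by
  constructor
  · rintro ⟨k, w, hw, hwl⟩ ⟨k', w', hw', hwl'⟩ h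
    have h1 : (Fin.snoc (α := fun _ => ℤ × ℤ) w p : Fin (n+1+1) → ℤ × ℤ)
        = Fin.snoc (α := fun _ => ℤ × ℤ) w' p := congrArg Subtype.val h
    have h2 : w = w' := by
      funext i
      have := congrFun h1 i.castSucc
      rwa [Fin.snoc_castSucc, Fin.snoc_castSucc] at this
    subst h2
    have h3 : k = k' := by
      apply stepVec_inj
      have := hwl.symm.trans hwl'
      exact sub_right_injective this
    subst h3
    rfl
  · rintro ⟨w, ⟨h0, h1, h2⟩, hl⟩
    obtain ⟨k, hk⟩ := exists_stepVec (h1 (Fin.last n))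
    rw [Fin.succ_last, hl] at hk
    refine ⟨⟨k, fun i => w i.castSucc, ⟨h0, fun m => ?_, fun m hm => h2 m.castSucc hm⟩, ?_⟩, ?_⟩
    · have := h1 m.castSucc
      rwa [← Fin.castSucc_succ] at this
    · rw [hk, sub_sub_cancel]
    · apply Subtype.ext
      funext i
      refine Fin.lastCases ?_ (fun m => ?_) i
      · simp only [extendWalk]; rw [Fin.snoc_last]; exact hl.symm
      · simp only [extendWalk]; rw [Fin.snoc_castSucc]

lemma slitWalks_empty (n : ℕ) (p : ℤ × ℤ) (hp : p ∈ slitH) : IsEmpty (SlitWalksTo (n+1) p) := by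
  constructor
  rintro ⟨w, ⟨h0, h1, h2⟩, hl⟩
  exact h2 (Fin.last _) (by simp) (hl ▸ hp)

lemma slitWalks_card (n : ℕ) : ∀ p : ℤ × ℤ,
    Finite (SlitWalksTo n p) ∧ (Nat.card (SlitWalksTo n p) : ℝ) = slitW n p := by
  induction n with
  | zero =>
    intro p
    have hs : Subsingleton (SlitWalksTo 0 p) := by
      constructor
      rintro ⟨w, hw, _⟩ ⟨w', hw', _⟩
      apply Subtype.ext
      funext i
      rw [show i = 0 from Fin.ext (by omega)]
      exact hw.1.trans hw'.1.symm
    refine ⟨inferInstance, ?_⟩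
    rw [slitW]
    split_ifs with h
    · have : Nonempty (SlitWalksTo 0 p) :=
        ⟨⟨fun _ => (0, 0), ⟨rfl, fun m => m.elim0, fun m hm => by omega⟩, h.symm⟩⟩
      rw [Nat.card_of_subsingleton this.some]; simp
    · have : IsEmpty (SlitWalksTo 0 p) := by
        constructor
        rintro ⟨w, hw, hl⟩
        exact h (hl.symm.trans hw.1)
      simp
  | succ n ih =>
    intro p
    by_cases hp : p ∈ slitH
    · have := slitWalks_empty n p hp
      refine ⟨inferInstance, ?_⟩
      have hp' : p.2 = 0 ∧ p.1 ≤ 0 := hp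
      rw [slitW, if_pos hp']; simp
    · have hf : ∀ q, Finite (SlitWalksTo n q) := fun q => (ih q).1
      have hb := extendWalk_bij n p hp
      refine ⟨Finite.of_surjective _ hb.2, ?_⟩
      rw [← Nat.card_eq_of_bijective _ hb, Nat.card_sigma]
      have hp' : ¬ (p.2 = 0 ∧ p.1 ≤ 0) := hp
      rw [slitW, if_neg hp']
      push_cast
      simp only [(ih _).2]
      obtain ⟨a, b⟩ := p
      simp [Fin.sum_univ_four, stepVec]

lemma slitCount_eq (i j : ℤ) (n : ℕ) : (slitCount sqSteps i j n : ℝ) = slitW n (i, j) :=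
  (slitWalks_card n (i, j)).2

lemma slitW_nonneg (n : ℕ) : ∀ p, 0 ≤ slitW n p := by
  induction n with
  | zero => intro p; rw [slitW]; split_ifs <;> norm_num
  | succ n ih =>
    intro p; rw [slitW]; split_ifs
    · exact le_rfl
    · have := ih (p.1 - 1, p.2); have := ih (p.1 + 1, p.2)
      have := ih (p.1, p.2 - 1); have := ih (p.1, p.2 + 1)
      positivity

lemma slitW_symm (n : ℕ) : ∀ i j, slitW n (i, -j) = slitW n (i, j) := by
  induction n with
  | zero => intro i j; simp [slitW]
  | succ n ih =>
    intro i j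
    have h1 := ih i (j + 1)
    have h2 := ih i (j - 1)
    rw [show -(j+1) = -j - 1 by ring] at h1
    rw [show -(j-1) = -j + 1 by ring] at h2
    simp only [slitW, ih, h1, h2, neg_eq_zero]
    split_ifs
    · rfl
    · ring

/-- Shift equivalences. -/
def shiftE (a b : ℤ) : ℤ × ℤ ≃ ℤ × ℤ where
  toFun p := (p.1 + a, p.2 + b)
  invFun p := (p.1 - a, p.2 - b)
  left_inv p := by ext <;> simp
  right_inv p := by ext <;> simp

lemma slitW_summable (n : ℕ) : Summable (slitW n) ∧ ∑' p, slitW n p ≤ 4 ^ n := by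
  induction n with
  | zero =>
    have : slitW 0 = fun p => if p = (0, 0) then 1 else 0 := by funext p; rw [slitW]
    rw [this]
    have h := hasSum_ite_eq ((0 : ℤ), (0 : ℤ)) (1 : ℝ)
    exact ⟨h.summable, by rw [h.tsum_eq]; norm_num⟩
  | succ n ih =>
    obtain ⟨hs, hle⟩ := ih
    have hsh : ∀ a b, HasSum (fun p : ℤ × ℤ => slitW n (p.1 + a, p.2 + b)) (∑' p, slitW n p) :=
      fun a b => (shiftE a b).hasSum_iff.2 hs.hasSum
    have h4 := (((hsh (-1) 0).add (hsh 1 0)).add (hsh 0 (-1))).add (hsh 0 1)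
    have hb : ∀ p, slitW (n+1) p ≤ slitW n (p.1 + -1, p.2 + 0) + slitW n (p.1 + 1, p.2 + 0)
        + slitW n (p.1 + 0, p.2 + -1) + slitW n (p.1 + 0, p.2 + 1) := by
      intro p
      rw [slitW]; split_ifs
      · have := slitW_nonneg n
        have := this (p.1 + -1, p.2 + 0); have := slitW_nonneg n (p.1 + 1, p.2 + 0)
        have := slitW_nonneg n (p.1 + 0, p.2 + -1); have := slitW_nonneg n (p.1 + 0, p.2 + 1)
        positivity
      · simp [sub_eq_add_neg]
    have hs' := Summable.of_nonneg_of_le (slitW_nonneg (n+1)) hb h4.summable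
    refine ⟨hs', (hs'.tsum_le_tsum hb h4.summable).trans ?_⟩
    rw [h4.tsum_eq, pow_succ]; linarith

/-- The generating function at `t`. -/
noncomputable def slitF (t : ℝ) (p : ℤ × ℤ) : ℝ := ∑' n, slitW n p * t ^ n

section fixedt
variable {t : ℝ}

lemma slitW_summable_prod (h0 : 0 < t) (h1 : t < 1/4) :
    Summable fun x : ℕ × (ℤ × ℤ) => slitW x.1 x.2 * t ^ x.1 := by
  rw [summable_prod_of_nonneg (fun x => mul_nonneg (slitW_nonneg _ _) (by positivity))]
  have h1s : ∀ n, Summable fun p : ℤ × ℤ => slitW n p * t ^ n :=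
    fun n => Summable.mul_right (t ^ n) (slitW_summable n).1
  refine ⟨h1s, ?_⟩
  have he : (fun n : ℕ => ∑' p : ℤ × ℤ, slitW n p * t ^ n)
      = fun n => (∑' p : ℤ × ℤ, slitW n p) * t ^ n := by
    funext n; exact tsum_mul_right
  change Summable (fun n : ℕ => ∑' p : ℤ × ℤ, slitW n p * t ^ n)
  rw [he]
  refine Summable.of_nonneg_of_le (f := fun n : ℕ => (4 * t) ^ n)
    (fun n => mul_nonneg (tsum_nonneg (slitW_nonneg n)) (by positivity)) (fun n => ?_)
    (summable_geometric_of_lt_one (r := 4 * t) (by positivity) (by linarith))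
  rw [mul_pow]
  exact mul_le_mul_of_nonneg_right (slitW_summable n).2 (by positivity)

lemma slitF_summable_n (h0 : 0 < t) (h1 : t < 1/4) (p : ℤ × ℤ) :
    Summable fun n => slitW n p * t ^ n :=
  (slitW_summable_prod h0 h1).comp_injective (i := fun n => (n, p))
    (fun _ _ h => congrArg Prod.fst h)

lemma slitF_summable (h0 : 0 < t) (h1 : t < 1/4) : Summable (slitF t) := by
  have h := ((Equiv.prodComm (ℤ × ℤ) ℕ).summable_iff.2 (slitW_summable_prod h0 h1)).prod
  exact h

lemma slitF_nonneg (h0 : 0 < t) (p : ℤ × ℤ) : 0 ≤ slitF t p :=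
  tsum_nonneg fun n => mul_nonneg (slitW_nonneg _ _) (by positivity)

lemma slitF_symm (i j : ℤ) : slitF t (i, -j) = slitF t (i, j) := by
  simp only [slitF, slitW_symm]

lemma slitF_zero (h0 : 0 < t) (h1 : t < 1/4) : slitF t (0, 0) = 1 := by
  rw [slitF, (slitF_summable_n h0 h1 _).tsum_eq_zero_add]
  simp [slitW]

lemma slitF_H (h0 : 0 < t) (h1 : t < 1/4) {i : ℤ} (hi : i < 0) : slitF t (i, 0) = 0 := by
  rw [slitF, (slitF_summable_n h0 h1 _).tsum_eq_zero_add]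
  simp [slitW, hi.le, hi.ne]

/-- The defect `f - t * (sum over neighbours of f)`. -/
noncomputable def slitD (t : ℝ) (p : ℤ × ℤ) : ℝ :=
  slitF t p - t * (slitF t (p.1 + -1, p.2 + 0) + slitF t (p.1 + 1, p.2 + 0)
    + slitF t (p.1 + 0, p.2 + -1) + slitF t (p.1 + 0, p.2 + 1))

lemma slitD_off (h0 : 0 < t) (h1 : t < 1/4) (p : ℤ × ℤ) (hp : ¬ (p.2 = 0 ∧ p.1 ≤ 0)) :
    slitD t p = 0 := by
  have hs := fun q => (slitF_summable_n h0 h1 q).hasSum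
  have h := (((((hs (p.1 - 1, p.2)).add (hs (p.1 + 1, p.2))).add (hs (p.1, p.2 - 1))).add
    (hs (p.1, p.2 + 1))).mul_left t).tsum_eq
  have h2 : slitF t p = ∑' n, slitW (n+1) p * t ^ (n+1) := by
    rw [slitF, (slitF_summable_n h0 h1 _).tsum_eq_zero_add]
    have : p ≠ (0, 0) := by rintro rfl; simp at hp
    simp [slitW, this]
  rw [slitD]
  simp only [add_zero, ← sub_eq_add_neg]
  rw [h2, sub_eq_zero]
  refine Eq.trans ?_ h
  congr 1
  funext n
  rw [slitW, if_neg hp]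
  ring

end fixedt

section green
variable {t : ℝ}

lemma slit_green (h0 : 0 < t) (h1 : t < 1/4) (φ : ℤ × ℤ → ℂ) (C : ℝ) (hφ : ∀ p, ‖φ p‖ ≤ C) :
    ∑' p, φ p * (slitD t p : ℂ) = ∑' p : ℤ × ℤ, (slitF t p : ℂ) *
      (φ p - t * (φ (p.1 + 1, p.2 + 0) + φ (p.1 + -1, p.2 + 0)
        + φ (p.1 + 0, p.2 + 1) + φ (p.1 + 0, p.2 + -1))) := by
  have hsum : ∀ a b : ℤ, Summable fun p : ℤ × ℤ => (slitF t p : ℂ) * φ (p.1 + a, p.2 + b) := by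
    intro a b
    refine Summable.of_norm_bounded ((slitF_summable h0 h1).mul_right C) (fun p => ?_)
    rw [norm_mul, Complex.norm_real, Real.norm_of_nonneg (slitF_nonneg h0 p)]
    exact mul_le_mul_of_nonneg_left (hφ _) (slitF_nonneg h0 p)
  have hA : ∀ a b aa bb : ℤ, a + aa = 0 → b + bb = 0 →
      HasSum (fun p : ℤ × ℤ => φ p * (slitF t (p.1 + aa, p.2 + bb) : ℂ))
      (∑' p : ℤ × ℤ, (slitF t p : ℂ) * φ (p.1 + a, p.2 + b)) := by
    intro a b aa bb ha hb
    have h := (shiftE aa bb).hasSum_iff.2 (hsum a b).hasSum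
    convert! h using 1
    funext p
    have e1 : a = - aa := by omega
    have e2 : b = - bb := by omega
    subst e1; subst e2
    simp [shiftE, mul_comm]
  have hB : HasSum (fun p : ℤ × ℤ => φ p * (slitF t p : ℂ)) (∑' p, (slitF t p : ℂ) * φ p) := by
    simpa using hA 0 0 0 0 rfl rfl
  have L := hB.sub (((((hA 1 0 (-1) 0 rfl rfl).add (hA (-1) 0 1 0 rfl rfl)).add
    (hA 0 1 0 (-1) rfl rfl)).add (hA 0 (-1) 0 1 rfl rfl)).mul_left (t : ℂ))
  have hB' : Summable (fun p : ℤ × ℤ => (slitF t p : ℂ) * φ p) := by simpa using hsum 0 0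
  have R := hB'.hasSum.sub ((((((hsum 1 0).hasSum).add (hsum (-1) 0).hasSum).add
    (hsum 0 1).hasSum).add (hsum 0 (-1)).hasSum).mul_left (t : ℂ))
  refine Eq.trans (Eq.trans ?_ L.tsum_eq) (Eq.trans R.tsum_eq.symm ?_)
  · congr 1; funext p; rw [slitD]; push_cast; ring
  · congr 1; funext p; ring

lemma slit_natsum_F (h0 : 0 < t) (h1 : t < 1/4) (g : ℤ × ℤ → ℂ) (hg : ∀ i j, j ≠ 0 → g (i, j) = 0) :
    ∑' p, (slitF t p : ℂ) * g p = ∑' k : ℕ, (slitF t (k, 0) : ℂ) * g (k, 0) := by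
  have hi : Function.Injective (fun k : ℕ => ((k : ℤ), (0 : ℤ))) := by
    intro a b h; simpa using h
  refine (hi.tsum_eq (f := fun p => (slitF t p : ℂ) * g p) ?_).symm
  rintro ⟨i, j⟩ hp
  by_cases hj : j = 0
  · subst hj
    rcases lt_or_ge i 0 with hi | hi
    · simp [slitF_H h0 h1 hi] at hp
    · exact ⟨i.toNat, by simp [hi]⟩
  · simp [hg i j hj] at hp

lemma slit_natsum_D (h0 : 0 < t) (h1 : t < 1/4) (g : ℤ × ℤ → ℂ) :
    ∑' p, g p * (slitD t p : ℂ) = ∑' k : ℕ, g (-k, 0) * (slitD t (-k, 0) : ℂ) := by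
  have hi : Function.Injective (fun k : ℕ => (-(k : ℤ), (0 : ℤ))) := by
    intro a b h; simpa using h
  refine (hi.tsum_eq (f := fun p => g p * (slitD t p : ℂ)) ?_).symm
  rintro ⟨i, j⟩ hp
  by_cases h : j = 0 ∧ i ≤ 0
  · exact ⟨(-i).toNat, by simp [h.1, h.2]⟩
  · simp [slitD_off h0 h1 (i, j) h] at hp

noncomputable def serF (t : ℝ) (z : ℂ) : ℂ := ∑' k : ℕ, (slitF t (k, 0) : ℂ) * z ^ k
noncomputable def serF1 (t : ℝ) (z : ℂ) : ℂ := ∑' k : ℕ, (slitF t ((k : ℤ) + 1, 0) : ℂ) * z ^ k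
noncomputable def serG (t : ℝ) (z : ℂ) : ℂ := ∑' k : ℕ, (slitD t (-k, 0) : ℂ) * z ^ k

/-- The kernel identity on the unit circle. -/
lemma slit_kernel (h0 : 0 < t) (h1 : t < 1/4) (x : ℂ) (hx : ‖x‖ = 1) :
    serF t x ^ 2 * ((1 - t * (x + x⁻¹)) ^ 2 - 4 * t ^ 2) = serG t x⁻¹ ^ 2 := by
  have hx0 : x ≠ 0 := by intro h; simp [h] at hx
  -- `x + x⁻¹` is real
  obtain ⟨u, hu, hul, huu⟩ : ∃ u : ℝ, x + x⁻¹ = (u : ℂ) ∧ -2 ≤ u ∧ u ≤ 2 := by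
    refine ⟨2 * x.re, ?_, ?_, ?_⟩
    · rw [Complex.inv_eq_conj hx]; exact_mod_cast Complex.add_conj x
    · have := Complex.abs_re_le_norm x; rw [hx] at this; linarith [(abs_le.1 this).1]
    · have := Complex.abs_re_le_norm x; rw [hx] at this; linarith [(abs_le.1 this).2]
  have hm1 : 2 * t < 1 - t * u := by nlinarith
  set m := 1 - t * u with hm
  set s := Real.sqrt (m ^ 2 - 4 * t ^ 2) with hs
  have hs2 : s ^ 2 = m ^ 2 - 4 * t ^ 2 := Real.sq_sqrt (by nlinarith)
  have hs0 : 0 ≤ s := Real.sqrt_nonneg _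
  set Y := (m - s) / (2 * t) with hY
  have hYe : 2 * t * Y = m - s := by rw [hY]; field_simp
  have hYq : t * Y ^ 2 - m * Y + t = 0 := by
    have : 4 * t * (t * Y ^ 2 - m * Y + t) = 0 := by
      have : 4 * t * (t * Y ^ 2 - m * Y + t) = (2 * t * Y) ^ 2 - 2 * m * (2 * t * Y) + 4 * t ^ 2 := by
        ring
      rw [this, hYe]; linarith [hs2]
    rcases mul_eq_zero.1 this with h | h
    · linarith
    · exact h
  have hsm : s ≤ m := by
    apply Real.sqrt_le_iff.2; constructor <;> nlinarith
  have hY0 : 0 ≤ Y := div_nonneg (by linarith) (by linarith)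
  have hY1 : Y ≤ 1 := by
    rw [hY, div_le_one (by linarith)]
    have : m - 2 * t ≤ s := Real.le_sqrt_of_sq_le (by nlinarith)
    linarith
  have hYqc : (t : ℂ) * (Y : ℂ) ^ 2 - (1 - t * (x + x⁻¹)) * Y + t = 0 := by
    rw [hu]; exact_mod_cast hYq
  let φ : ℤ × ℤ → ℂ := fun p => x ^ p.1 * (Y : ℂ) ^ p.2.natAbs
  have hφ : ∀ p, ‖φ p‖ ≤ 1 := by
    intro p
    simp only [φ, norm_mul, norm_zpow, hx, one_zpow, one_mul, norm_pow, Complex.norm_real,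
      Real.norm_of_nonneg hY0]
    exact pow_le_one₀ hY0 hY1
  have hg := slit_green h0 h1 φ 1 hφ
  have hL : ∀ i j : ℤ, φ (i, j) - t * (φ (i + 1, j + 0) + φ (i + -1, j + 0)
        + φ (i + 0, j + 1) + φ (i + 0, j + -1)) = if j = 0 then (s : ℂ) * x ^ i else 0 := by
    intro i j
    simp only [φ, add_zero, zpow_add₀ hx0, zpow_one, zpow_neg]
    split_ifs with hj
    · subst hj
      have : (s : ℂ) = 1 - t * (x + x⁻¹) - 2 * t * Y := by
        rw [hu]; have : s = m - 2 * t * Y := by linarith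
        rw [this, hm]; push_cast; ring
      rw [this]
      simp
      ring
    · obtain ⟨k, hk⟩ : ∃ k : ℕ, (j.natAbs = k + 1 ∧ (((j+1).natAbs = k + 2 ∧ (j + -1).natAbs = k) ∨
        ((j+1).natAbs = k ∧ (j + -1).natAbs = k + 2))) := ⟨j.natAbs - 1, by omega⟩
      rcases hk with ⟨e, ⟨e1, e2⟩ | ⟨e1, e2⟩⟩ <;> rw [e, e1, e2] <;>
        linear_combination (-(x ^ i) * (Y : ℂ) ^ k) * hYqc
  have hR : ∑' p, φ p * (slitD t p : ℂ) = serG t x⁻¹ := by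
    rw [slit_natsum_D h0 h1, serG]
    congr 1; funext k
    simp [φ, mul_comm]
  have hF : ∑' p : ℤ × ℤ, (slitF t p : ℂ) *
      (φ p - t * (φ (p.1 + 1, p.2 + 0) + φ (p.1 + -1, p.2 + 0)
        + φ (p.1 + 0, p.2 + 1) + φ (p.1 + 0, p.2 + -1))) = s * serF t x := by
    rw [slit_natsum_F h0 h1 (fun p => φ p - t * (φ (p.1 + 1, p.2 + 0) + φ (p.1 + -1, p.2 + 0)
        + φ (p.1 + 0, p.2 + 1) + φ (p.1 + 0, p.2 + -1))) (fun i j hj => by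
          simp only [hL, if_neg hj]), serF, ← tsum_mul_left]
    congr 1; funext k
    simp only [hL, if_true, zpow_natCast]
    ring
  rw [← hR, hg, hF, hu]
  have : (s : ℂ) ^ 2 = (1 - t * u) ^ 2 - 4 * t ^ 2 := by
    have : ((s ^ 2 : ℝ) : ℂ) = ((m ^ 2 - 4 * t ^ 2 : ℝ) : ℂ) := by rw [hs2]
    rw [hm] at this; push_cast at this; exact this
  rw [← this]; ring

lemma slitD_zero (h0 : 0 < t) (h1 : t < 1/4) :
    slitD t (0, 0) = 1 - t * (slitF t (1, 0) + 2 * slitF t (0, 1)) := by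
  have := slitF_symm (t := t) 0 1
  have h2 := slitF_H (t := t) h0 h1 (i := -1) (by norm_num)
  simp only [slitD, slitF_zero h0 h1]
  norm_num
  rw [h2, this]
  ring_nf
  simp

lemma slitD_zero_nonneg (h0 : 0 < t) (h1 : t < 1/4) : 0 ≤ slitD t (0, 0) := by
  have hg := slit_green h0 h1 (fun _ => 1) 1 (by simp)
  have hR : ∑' p : ℤ × ℤ, (slitF t p : ℂ) * ((1 : ℂ) - t * (1 + 1 + 1 + 1))
      = (((∑' p, slitF t p) * (1 - 4 * t) : ℝ) : ℂ) := by
    rw [tsum_mul_right]; push_cast; ring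
  have hL : ∑' p : ℤ × ℤ, (1 : ℂ) * (slitD t p : ℂ) = ((∑' p, slitD t p : ℝ) : ℂ) := by
    simp only [one_mul, Complex.ofReal_tsum]
  rw [hR, hL] at hg
  have hg' := Complex.ofReal_injective hg
  have hpos : 0 ≤ ∑' p, slitD t p := by
    rw [hg']; exact mul_nonneg (tsum_nonneg (slitF_nonneg h0)) (by linarith)
  by_contra hneg
  push Not at hneg
  have hle : ∀ p, slitD t p ≤ 0 := by
    rintro ⟨i, j⟩
    by_cases h : j = 0 ∧ i ≤ 0
    · obtain ⟨rfl, hi⟩ := h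
      rcases hi.lt_or_eq with hi | rfl
      · rw [slitD, slitF_H h0 h1 hi]
        have hn := slitF_nonneg h0
        have := mul_nonneg h0.le (add_nonneg (add_nonneg (add_nonneg (hn (i + -1, 0 + 0))
          (hn (i + 1, 0 + 0))) (hn (i + 0, 0 + -1))) (hn (i + 0, 0 + 1)))
        simp only [] at this ⊢
        linarith
      · exact hneg.le
    · exact (slitD_off h0 h1 (i, j) h).le
  by_cases hsm : Summable (slitD t)
  · have := hsm.tsum_lt_tsum (g := fun _ => 0) (i := (0, 0)) hle hneg summable_zero
    simp only [tsum_zero] at this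
    linarith
  · apply hsm
    have hs := slitF_summable h0 h1
    have hsh : ∀ a b, Summable (fun p : ℤ × ℤ => slitF t (p.1 + a, p.2 + b)) :=
      fun a b => (shiftE a b).summable_iff.2 hs
    exact hs.sub (((((hsh (-1) 0).add (hsh 1 0)).add (hsh 0 (-1))).add (hsh 0 1)).mul_left t)

lemma slitD_summable (h0 : 0 < t) (h1 : t < 1/4) : Summable (slitD t) := by
  have hs := slitF_summable h0 h1
  have hsh : ∀ a b, Summable (fun p : ℤ × ℤ => slitF t (p.1 + a, p.2 + b)) :=
    fun a b => (shiftE a b).summable_iff.2 hs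
  exact hs.sub (((((hsh (-1) 0).add (hsh 1 0)).add (hsh 0 (-1))).add (hsh 0 1)).mul_left t)

end green

section analytic
open Metric Real
variable {t : ℝ}

lemma ser_diffCont (a : ℕ → ℝ) (ha : Summable a) :
    DiffContOnCl ℂ (fun z : ℂ => ∑' k : ℕ, (a k : ℂ) * z ^ k) (ball 0 1) := by
  have hb : ∀ (k : ℕ) (z : ℂ), z ∈ closedBall (0 : ℂ) 1 → ‖(a k : ℂ) * z ^ k‖ ≤ |a k| := by
    intro k z hz
    rw [mem_closedBall_zero_iff] at hz
    rw [norm_mul, norm_pow, Complex.norm_real, Real.norm_eq_abs]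
    exact mul_le_of_le_one_right (abs_nonneg _) (pow_le_one₀ (norm_nonneg _) hz)
  refine ⟨?_, ?_⟩
  · exact Complex.differentiableOn_tsum_of_summable_norm ha.abs (fun k => by fun_prop) isOpen_ball
      (fun k z hz => hb k z (ball_subset_closedBall hz))
  · rw [closure_ball _ one_ne_zero]
    exact continuousOn_tsum (fun k => by fun_prop) ha.abs hb

lemma serF_split (h0 : 0 < t) (h1 : t < 1/4) (z : ℂ) (hz : ‖z‖ ≤ 1) :
    serF t z = 1 + z * serF1 t z := by
  have hs : Summable fun k : ℕ => (slitF t (k, 0) : ℂ) * z ^ k := by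
    have hi : Function.Injective (fun k : ℕ => ((k : ℤ), (0 : ℤ))) := by
      intro a b h; simpa using h
    refine Summable.of_norm_bounded ((slitF_summable h0 h1).comp_injective hi) (fun k => ?_)
    rw [norm_mul, norm_pow, Complex.norm_real, Real.norm_of_nonneg (slitF_nonneg h0 _)]
    exact mul_le_of_le_one_right (slitF_nonneg h0 _) (pow_le_one₀ (norm_nonneg _) hz)
  rw [serF, hs.tsum_eq_zero_add, serF1, ← tsum_mul_left]
  congr 1
  · simp [slitF_zero h0 h1]
  · congr 1; funext k; push_cast; ring

lemma avg_eq (f : ℂ → ℂ) (hf : DiffContOnCl ℂ f (ball 0 1)) : circleAverage f 0 1 = f 0 := by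
  apply DiffContOnCl.circleAverage
  simpa using hf

lemma tsum_pow_zero (a : ℕ → ℂ) : ∑' k : ℕ, a k * (0 : ℂ) ^ k = a 0 := by
  rw [tsum_eq_single 0]
  · simp
  · intro k hk; simp [hk]

lemma slit_solve (h0 : 0 < t) (h1 : t < 1/4) {α β : ℝ} (hα0 : 0 < α) (hα1 : α < 1)
    (hβ0 : 0 < β) (hβ1 : β < 1) (hα : t * (1 + α ^ 2) = (1 - 2 * t) * α)
    (hβ : t * (1 + β ^ 2) = (1 + 2 * t) * β) :
    2 * slitF t (1, 0) = α + β ∧ α * β * slitD t (0, 0) ^ 2 = t ^ 2 := by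
  have hiF1 : Function.Injective (fun k : ℕ => ((k : ℤ) + 1, (0 : ℤ))) := by
    intro a b h; simpa using h
  have hiG : Function.Injective (fun k : ℕ => (-(k : ℤ), (0 : ℤ))) := by
    intro a b h; simpa using h
  have hF1d : DiffContOnCl ℂ (serF1 t) (ball 0 1) :=
    ser_diffCont _ ((slitF_summable h0 h1).comp_injective hiF1)
  have hGd : DiffContOnCl ℂ (serG t) (ball 0 1) :=
    ser_diffCont _ ((slitD_summable h0 h1).comp_injective hiG)
  have hF10 : serF1 t 0 = (slitF t (1, 0) : ℂ) := by
    rw [serF1, tsum_pow_zero]; simp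
  have hG0 : serG t 0 = (slitD t (0, 0) : ℂ) := by
    rw [serG, tsum_pow_zero]; simp
  have hid : DiffContOnCl ℂ (fun z : ℂ => z) (ball 0 1) := differentiable_id.diffContOnCl
  have hlin : ∀ c : ℂ, DiffContOnCl ℂ (fun z : ℂ => 1 - c * z) (ball 0 1) := fun c =>
    Differentiable.diffContOnCl (by fun_prop)
  have hne : ∀ c : ℝ, 0 < c → c < 1 → ∀ z : ℂ, ‖z‖ ≤ 1 → (1 - (c : ℂ) * z) ≠ 0 := by
    intro c hc0 hc1 z hz h
    have h2 : (c : ℂ) * z = 1 := by linear_combination -h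
    have h3 := congrArg norm h2
    rw [norm_mul, Complex.norm_real, Real.norm_of_nonneg hc0.le, norm_one] at h3
    nlinarith [norm_nonneg z]
  have hinv : ∀ c : ℝ, 0 < c → c < 1 →
      DiffContOnCl ℂ (fun z : ℂ => (1 - (c : ℂ) * z)⁻¹) (ball 0 1) := by
    intro c hc0 hc1
    refine (hlin c).inv (fun z hz => hne c hc0 hc1 z ?_)
    rw [closure_ball _ one_ne_zero, mem_closedBall_zero_iff] at hz
    exact hz
  let P1 : ℂ → ℂ := fun z => (2 * serF1 t z + z * (serF1 t z * serF1 t z)) *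
      ((1 - α * z) * (1 - β * z)) + (-(α + β) + α * β * z)
  let P : ℂ → ℂ := fun z => 1 + z * P1 z
  let Q : ℂ → ℂ := fun z => (α * β / t ^ 2 : ℂ) *
    ((serG t z * serG t z) * ((1 - (α : ℂ) * z)⁻¹ * (1 - (β : ℂ) * z)⁻¹))
  have hmul : ∀ {f g : ℂ → ℂ}, DiffContOnCl ℂ f (ball 0 1) → DiffContOnCl ℂ g (ball 0 1) →
      DiffContOnCl ℂ (fun z => f z * g z) (ball 0 1) := fun hf hg => hf.smul hg
  have hP1d : DiffContOnCl ℂ P1 (ball 0 1) := by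
    have hA : DiffContOnCl ℂ (fun z => 2 * serF1 t z) (ball 0 1) := hF1d.const_smul (2 : ℂ)
    have hB : DiffContOnCl ℂ (fun z : ℂ => -(α + β : ℂ) + α * β * z) (ball 0 1) :=
      Differentiable.diffContOnCl (by fun_prop)
    exact (hmul (hA.add (hmul hid (hmul hF1d hF1d))) (hmul (hlin α) (hlin β))).add hB
  have hPd : DiffContOnCl ℂ P (ball 0 1) := (hmul hid hP1d).const_add 1
  have hQd : DiffContOnCl ℂ Q (ball 0 1) :=
    (hmul (hmul hGd hGd) (hmul (hinv α hα0 hα1) (hinv β hβ0 hβ1))).const_smul (α * β / t ^ 2 : ℂ)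
  have htc : (t : ℂ) ≠ 0 := by exact_mod_cast h0.ne'
  have hPQ : ∀ z : ℂ, ‖z‖ = 1 → P z = Q z⁻¹ := by
    intro z hz
    have hz0 : z ≠ 0 := by intro h; simp [h] at hz
    have hzi : ‖z⁻¹‖ ≤ 1 := by rw [norm_inv, hz]; norm_num
    have e1 : P z = serF t z ^ 2 * ((1 - α * z) * (1 - β * z)) := by
      rw [serF_split h0 h1 z hz.le]; simp only [P, P1]; ring
    have k := slit_kernel h0 h1 z hz
    have n1 := hne α hα0 hα1 z⁻¹ hzi
    have n2 := hne β hβ0 hβ1 z⁻¹ hzi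
    have hzz : z * z⁻¹ = 1 := mul_inv_cancel₀ hz0
    have hαc : (t : ℂ) * (1 + α ^ 2) = (1 - 2 * t) * α := by exact_mod_cast hα
    have hβc : (t : ℂ) * (1 + β ^ 2) = (1 + 2 * t) * β := by exact_mod_cast hβ
    have a1 : (α : ℂ) * (1 - 2 * t - t * (z + z⁻¹)) = t * ((1 - α * z) * (1 - α * z⁻¹)) := by
      linear_combination (-(t : ℂ) * α ^ 2) * hzz - hαc
    have a2 : (β : ℂ) * (1 + 2 * t - t * (z + z⁻¹)) = t * ((1 - β * z) * (1 - β * z⁻¹)) := by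
      linear_combination (-(t : ℂ) * β ^ 2) * hzz - hβc
    have e2 : Q z⁻¹ * ((t : ℂ) ^ 2 * ((1 - α * z⁻¹) * (1 - β * z⁻¹))) =
        α * β * serG t z⁻¹ ^ 2 := by
      simp only [Q]
      generalize z⁻¹ = y at n1 n2 ⊢
      field_simp
    have n3 : ((t : ℂ) ^ 2 * ((1 - α * z⁻¹) * (1 - β * z⁻¹))) ≠ 0 :=
      mul_ne_zero (pow_ne_zero _ htc) (mul_ne_zero n1 n2)
    apply mul_right_cancel₀ n3
    rw [e2, e1, ← k]
    have a3 : ((α : ℂ) * (1 - 2 * t - t * (z + z⁻¹))) * ((β : ℂ) * (1 + 2 * t - t * (z + z⁻¹)))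
      = (t * ((1 - α * z) * (1 - α * z⁻¹))) * (t * ((1 - β * z) * (1 - β * z⁻¹))) := by
      rw [a1, a2]
    linear_combination (-(serF t z ^ 2)) * a3
  have hQ0 : Q 0 = 1 := by
    rw [← avg_eq Q hQd, ← circleAverage_zero_one_congr_inv]
    have : circleAverage (fun z => Q z⁻¹) 0 1 = circleAverage P 0 1 := by
      apply circleAverage_congr_sphere
      intro z hz
      exact (hPQ z (by simpa using hz)).symm
    rw [this, avg_eq P hPd]; simp [P]
  have hP10 : P1 0 = 0 := by
    let R : ℂ → ℂ := fun z => z * Q z - z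
    have hRd : DiffContOnCl ℂ R (ball 0 1) := (hmul hid hQd).sub hid
    rw [← avg_eq P1 hP1d]
    have : circleAverage (fun z => R z⁻¹) 0 1 = circleAverage P1 0 1 := by
      apply circleAverage_congr_sphere
      intro z hz
      have hz1 : ‖z‖ = 1 := by simpa using hz
      have hz0 : z ≠ 0 := by intro h; simp [h] at hz1
      simp only [R]
      rw [← hPQ z hz1]
      simp only [P]
      field_simp
      ring
    rw [← this, circleAverage_zero_one_congr_inv, avg_eq R hRd]; simp [R]
  constructor
  · have : 2 * (slitF t (1, 0) : ℂ) - (α + β) = 0 := by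
      rw [← hP10]; simp only [P1, hF10]; ring
    have h : 2 * slitF t (1, 0) - (α + β) = 0 := by exact_mod_cast this
    linarith
  · have : (α : ℂ) * β * (slitD t (0, 0) : ℂ) ^ 2 = t ^ 2 := by
      simp only [Q, hG0] at hQ0
      field_simp at hQ0
      simp at hQ0
      linear_combination hQ0
    exact_mod_cast this

lemma slit_values (h0 : 0 < t) (h1 : t < 1/4) :
    slitF t (1, 0) = ((1 - √(1 - 4 * t)) / (1 + √(1 - 4 * t)) +
      (√(1 + 4 * t) - 1) / (√(1 + 4 * t) + 1)) / 2 ∧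
    slitD t (0, 0) = t / √((1 - √(1 - 4 * t)) / (1 + √(1 - 4 * t)) *
      ((√(1 + 4 * t) - 1) / (√(1 + 4 * t) + 1))) := by
  set s := √(1 - 4 * t) with hs
  set r := √(1 + 4 * t) with hr
  have hs2 : s ^ 2 = 1 - 4 * t := Real.sq_sqrt (by linarith)
  have hr2 : r ^ 2 = 1 + 4 * t := Real.sq_sqrt (by linarith)
  have hs0 : 0 < s := Real.sqrt_pos.2 (by linarith)
  have hs1 : s < 1 := by nlinarith
  have hr0 : 0 ≤ r := Real.sqrt_nonneg _
  have hr1 : 1 < r := by nlinarith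
  have hα0 : 0 < (1 - s) / (1 + s) := div_pos (by linarith) (by linarith)
  have hβ0 : 0 < (r - 1) / (r + 1) := div_pos (by linarith) (by linarith)
  have hα1 : (1 - s) / (1 + s) < 1 := by rw [div_lt_one (by linarith)]; linarith
  have hβ1 : (r - 1) / (r + 1) < 1 := by rw [div_lt_one (by linarith)]; linarith
  have t1 : t = (1 - s ^ 2) / 4 := by linarith
  have t2 : t = (r ^ 2 - 1) / 4 := by linarith
  have p1 : 1 + s ≠ 0 := by linarith
  have p2 : r + 1 ≠ 0 := by linarith
  have hα : t * (1 + ((1 - s) / (1 + s)) ^ 2) = (1 - 2 * t) * ((1 - s) / (1 + s)) := by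
    rw [t1]; field_simp; ring
  have hβ : t * (1 + ((r - 1) / (r + 1)) ^ 2) = (1 + 2 * t) * ((r - 1) / (r + 1)) := by
    rw [t2]; field_simp; ring
  obtain ⟨e1, e2⟩ := slit_solve h0 h1 hα0 hα1 hβ0 hβ1 hα hβ
  have hD := slitD_zero_nonneg h0 h1
  refine ⟨by linarith, ?_⟩
  have hp : 0 < (1 - s) / (1 + s) * ((r - 1) / (r + 1)) := mul_pos hα0 hβ0
  rw [eq_div_iff (Real.sqrt_pos.2 hp).ne']
  apply (sq_eq_sq₀ (mul_nonneg hD (Real.sqrt_nonneg _)) h0.le).1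
  rw [mul_pow, Real.sq_sqrt hp.le]; linarith

lemma abel_nonneg (d : ℕ → ℝ) (hd : ∀ n, 0 ≤ d n) (V : ℝ)
    (hs : ∀ x : ℝ, 0 < x → x < 1 → Summable fun n => d n * x ^ n)
    (hV : Tendsto (fun x : ℝ => ∑' n, d n * x ^ n) (nhdsWithin 1 (Set.Iio 1)) (nhds V)) :
    Summable d ∧ ∑' n, d n = V := by
  have hev : ∀ᶠ x : ℝ in nhdsWithin 1 (Set.Iio 1), 0 < x ∧ x < 1 := by
    have h1 : ∀ᶠ x : ℝ in nhdsWithin 1 (Set.Iio 1), 0 < x :=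
      nhdsWithin_le_nhds (lt_mem_nhds one_pos)
    filter_upwards [h1, self_mem_nhdsWithin] with x a b using ⟨a, b⟩
  have hsum : Summable d := by
    refine summable_of_sum_le (c := V) hd (fun u => ?_)
    have ht : Tendsto (fun x : ℝ => ∑ n ∈ u, d n * x ^ n) (nhdsWithin 1 (Set.Iio 1))
        (nhds (∑ n ∈ u, d n)) := by
      have hc : Continuous (fun x : ℝ => ∑ n ∈ u, d n * x ^ n) := by fun_prop
      have := hc.tendsto 1
      simp only [one_pow, mul_one] at this
      exact this.mono_left nhdsWithin_le_nhds
    refine le_of_tendsto_of_tendsto ht hV ?_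
    filter_upwards [hev] with x hx
    exact (hs x hx.1 hx.2).sum_le_tsum u (fun n _ => mul_nonneg (hd n) (pow_nonneg hx.1.le n))
  exact ⟨hsum, tendsto_nhds_unique
    (Real.tendsto_tsum_powerSeries_nhdsWithin_lt hsum.hasSum.tendsto_sum_nat) hV⟩

lemma slit_abel (p : ℤ × ℤ) (v : ℝ → ℝ) (hv : ∀ t, 0 < t → t < 1/4 → slitF t p = v t)
    (hc : ContinuousAt v (1/4)) :
    (Summable fun n : ℕ => slitW n p / 4 ^ n) ∧ ∑' n : ℕ, slitW n p / 4 ^ n = v (1/4) := by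
  have he : ∀ x : ℝ, (fun n : ℕ => slitW n p / 4 ^ n * x ^ n)
      = fun n => slitW n p * (x / 4) ^ n := by
    intro x; funext n; rw [div_pow]; ring
  refine abel_nonneg _ (fun n => div_nonneg (slitW_nonneg n p) (by positivity)) _ ?_ ?_
  · intro x h0 h1
    rw [he]
    exact slitF_summable_n (by linarith) (by linarith) p
  · have h2 : Tendsto (fun x : ℝ => v (x / 4)) (nhdsWithin 1 (Set.Iio 1)) (nhds (v (1/4))) := by
      have : Tendsto (fun x : ℝ => x / 4) (nhds 1) (nhds (1/4)) := by
        have h : Continuous (fun x : ℝ => x / 4) := by fun_prop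
        exact h.tendsto 1
      exact (hc.tendsto.comp this).mono_left nhdsWithin_le_nhds
    refine h2.congr' ?_
    have h1 : ∀ᶠ x : ℝ in nhdsWithin 1 (Set.Iio 1), 0 < x :=
      nhdsWithin_le_nhds (lt_mem_nhds one_pos)
    filter_upwards [h1, self_mem_nhdsWithin] with x a b
    have bb : x < 1 := b
    rw [he, ← hv (x/4) (by linarith) (by linarith), slitF]

noncomputable def val10 (t : ℝ) : ℝ := ((1 - √(1 - 4 * t)) / (1 + √(1 - 4 * t)) +
      (√(1 + 4 * t) - 1) / (√(1 + 4 * t) + 1)) / 2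

noncomputable def valD (t : ℝ) : ℝ := t / √((1 - √(1 - 4 * t)) / (1 + √(1 - 4 * t)) *
      ((√(1 + 4 * t) - 1) / (√(1 + 4 * t) + 1)))

lemma val10_cont : ContinuousAt val10 (1/4) := by
  have h : Continuous val10 := by
    unfold val10
    refine Continuous.div_const (Continuous.add (Continuous.div (by fun_prop) (by fun_prop) ?_)
      (Continuous.div (by fun_prop) (by fun_prop) ?_)) 2
    · intro x; have := Real.sqrt_nonneg (1 - 4 * x); positivity
    · intro x; have := Real.sqrt_nonneg (1 + 4 * x); positivity
  exact h.continuousAt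

lemma val10_eq : val10 (1/4) = 2 - √2 := by
  have h2 : √2 ^ 2 = 2 := Real.sq_sqrt (by norm_num)
  have h0 := Real.sqrt_nonneg 2
  have h3 : √2 + 1 ≠ 0 := by positivity
  unfold val10
  norm_num
  field_simp
  nlinarith

lemma inner_eq : (1 - √(1 - 4 * (1/4 : ℝ))) / (1 + √(1 - 4 * (1/4 : ℝ))) *
      ((√(1 + 4 * (1/4 : ℝ)) - 1) / (√(1 + 4 * (1/4 : ℝ)) + 1)) = (√2 - 1) ^ 2 := by
  have h2 : √2 ^ 2 = 2 := Real.sq_sqrt (by norm_num)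
  have h0 := Real.sqrt_nonneg 2
  have h3 : √2 + 1 ≠ 0 := by positivity
  norm_num
  field_simp
  nlinarith

lemma sqrt2_gt : 1 < √2 := by
  rw [Real.lt_sqrt] <;> norm_num

lemma valD_cont : ContinuousAt valD (1/4) := by
  unfold valD
  have h1 : Continuous fun t : ℝ => (1 - √(1 - 4 * t)) / (1 + √(1 - 4 * t)) *
      ((√(1 + 4 * t) - 1) / (√(1 + 4 * t) + 1)) := by
    refine Continuous.mul (Continuous.div (by fun_prop) (by fun_prop) ?_)
      (Continuous.div (by fun_prop) (by fun_prop) ?_)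
    · intro x; have := Real.sqrt_nonneg (1 - 4 * x); positivity
    · intro x; have := Real.sqrt_nonneg (1 + 4 * x); positivity
  refine ContinuousAt.div continuousAt_id (Real.continuous_sqrt.comp h1).continuousAt ?_
  rw [inner_eq]
  have := sqrt2_gt
  exact (Real.sqrt_pos.2 (pow_pos (by linarith) 2)).ne'

lemma valD_eq : valD (1/4) = (√2 + 1) / 4 := by
  have h2 : √2 ^ 2 = 2 := Real.sq_sqrt (by norm_num)
  have h := sqrt2_gt
  rw [valD, inner_eq, Real.sqrt_sq (by linarith), div_eq_iff (by linarith)]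
  nlinarith

noncomputable def val01 (t : ℝ) : ℝ := (1 - valD t - t * val10 t) / (2 * t)

lemma val01_cont : ContinuousAt val01 (1/4) := by
  unfold val01
  exact ((continuousAt_const.sub valD_cont).sub (continuousAt_id.mul val10_cont)).div
    (by fun_prop) (by norm_num)

lemma val01_eq : val01 (1/4) = 1/2 := by
  rw [val01, valD_eq, val10_eq]; ring

lemma slitF_10 (t : ℝ) (h0 : 0 < t) (h1 : t < 1/4) : slitF t (1, 0) = val10 t :=
  (slit_values h0 h1).1

lemma slitF_01 (t : ℝ) (h0 : 0 < t) (h1 : t < 1/4) : slitF t (0, 1) = val01 t := by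
  have h := slitD_zero h0 h1
  have hD : slitD t (0, 0) = valD t := (slit_values h0 h1).2
  rw [val01, ← hD, ← slitF_10 t h0 h1, h]
  field_simp
  ring

end analytic

/-- `∑_{n≥0} a_{0,1}(n)/4ⁿ = 1/2` and `∑_{n≥0} a_{1,0}(n)/4ⁿ = 2 − √2`
(both series converge); i.e. a simple random walk started at `(0,1)` (resp. `(1,0)`),
stopped when it first hits `H`, stops at the origin with probability `1/2`
(resp. `2 − √2`). -/
theorem slit_plane_hitting_probabilities :
    (Summable fun n : ℕ => (slitCount sqSteps 0 1 n : ℝ) / 4 ^ n)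
    ∧ (∑' n : ℕ, (slitCount sqSteps 0 1 n : ℝ) / 4 ^ n) = 1 / 2
    ∧ (Summable fun n : ℕ => (slitCount sqSteps 1 0 n : ℝ) / 4 ^ n)
    ∧ (∑' n : ℕ, (slitCount sqSteps 1 0 n : ℝ) / 4 ^ n) = 2 - Real.sqrt 2 := by
  simp only [slitCount_eq]
  have h1 := slit_abel (0, 1) val01 slitF_01 val01_cont
  have h2 := slit_abel (1, 0) val10 slitF_10 val10_cont
  rw [val01_eq] at h1
  rw [val10_eq] at h2
  exact ⟨h1.1, h1.2, h2.1, h2.2⟩
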